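/- (Deterministic core of the main theorem.) Let f_1,…,f_m : ℝ^d → ℝ be differentiable with each ∇f_i being L-Lipschitz continuous, set f = (1/m)Σ_i f_i, and assume f(x) ≥ f* for all x. Let ε > 0, η = 1/(2L), let m, n, b, T be positive integers with m b² ≥ 36 n and T ≥ 16L(f(x̄₀) − f*)/ε², set p = b/(b+n), and let 0 ≤ ρ ≤ ρ̂ with 296ρ̂² ≤ 1 and 4mpρ² ≤ 1. Let x₀,…,x_T ∈ ℝ^{m×d}, and let U_t, V_t, C_t ≥ 0 (t = 0,…,T) satisfy C_t ≥ ‖x_t − 𝟙x̄_tᵀ‖², U₀ = V₀ = 0, C₀ ≤ mη²ε²/8, and for every 0 ≤ t < T, with F_t = f(x̄_t), G_t = ‖∇f(x̄_t)‖², D_t = ‖x̄_{t+1} − x̄_t‖²: (A) F_{t+1} ≤ F_t − (η/2)G_t + ηU_t + (L²η/m)C_t − (1/(2η) − L/2)D_t; (B) U_{t+1} ≤ (1−p)U_t + (9(1−p)L²/(m²b))C_t + (3(1−p)L²/(mb))D_t; (C) V_{t+1} ≤ (1−p)V_t + (9(1−p)L²/(mb))C_t + (3(1−p)L²/b)D_t;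 (D) C_{t+1} ≤ (1/4)C_t + 4ρ²pη²mV_t + 6(ρ̂²(1−p)/b + 2ρ²p)mD_t. Then (1/(mT)) Σ_{t=0}^{T−1} Σ_{i=1}^m ‖∇f(x_t(i))‖² ≤ ε². -/

import Mathlib

open scoped BigOperators

noncomputable section

/-- Frobenius norm of a matrix represented by its rows (Euclidean norm for vectors). -/
def fnorm {m : ℕ} {E : Type} [NormedAddCommGroup E] (u : Fin m → E) : ℝ :=
  Real.sqrt (∑ i, ‖u i‖ ^ 2)

/-- Average of the rows of a matrix: `ū = (1/m) 𝟙ᵀ u`. -/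
def rowAvg {m : ℕ} {E : Type} [AddCommGroup E] [Module ℝ E] (u : Fin m → E) : E :=
  (m : ℝ)⁻¹ • ∑ i, u i

/-- Action of the gossip matrix `W` on the rows of `u`. -/
def gossipMul {m : ℕ} (W : Fin m → Fin m → ℝ) {E : Type} [AddCommGroup E] [Module ℝ E]
    (u : Fin m → E) : Fin m → E :=
  fun i => ∑ j, W i j • u j

/-- The pair `(u^(k), u^(k-1))` of the Chebyshev-accelerated gossip recursion
`u^(k+1) = (1+η_u) W u^(k) - η_u u^(k-1)` with
`η_u = (1 - √(1-λ₂²))/(1 + √(1-λ₂²))`. -/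
def fastMixPair {m : ℕ} (W : Fin m → Fin m → ℝ) (lam : ℝ) {E : Type} [AddCommGroup E]
    [Module ℝ E] (u0 : Fin m → E) : ℕ → (Fin m → E) × (Fin m → E)
  | 0 => (u0, u0)
  | K + 1 =>
      let p := fastMixPair W lam u0 K
      let etau := (1 - Real.sqrt (1 - lam ^ 2)) / (1 + Real.sqrt (1 - lam ^ 2))
      ((1 + etau) • gossipMul W p.1 - etau • p.2, p.1)

/-- `FastMix(u⁰, K) = u^(K)`. -/
def fastMix {m : ℕ} (W : Fin m → Fin m → ℝ) (lam : ℝ) {E : Type} [AddCommGroup E]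
    [Module ℝ E] (u0 : Fin m → E) (K : ℕ) : Fin m → E :=
  (fastMixPair W lam u0 K).1

/-!
Each of the four recursions telescopes over `t < T`. Since `1 - p ≤ (m b / 36) p`, summing the two
estimation-error recursions gives `∑ U ≤ L² / (4m) ∑ C + L² / 12 ∑ D` and
`∑ V ≤ L² / 4 ∑ C + m L² / 12 ∑ D`. The consensus recursion contracts by `1/4`, and inserting the
bound on `∑ V` costs only another `1/16`, so `11/16 ∑ C ≤ C 0 + m / 12 ∑ D`. Passing from `∇f(x̄_t)`
to `∇f(x_t(i))` costs a further multiple of `∑ C`, so the total error is a multiple of `C 0` plus a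
multiple of `∑ D`, and the term `-(1 / (2η) - L / 2) ∑ D` of the telescoped descent inequality
absorbs the latter. What remains is controlled by the initial gap `F 0 - f⋆` and by `C 0`.
-/

open Finset

section RowAverage

variable {m : ℕ} {E : Type}

lemma rowAvg_sub [AddCommGroup E] [Module ℝ E] (u v : Fin m → E) :
    rowAvg (u - v) = rowAvg u - rowAvg v := by
  simp only [rowAvg, Pi.sub_apply, sum_sub_distrib, smul_sub]

lemma norm_rowAvg_le [SeminormedAddCommGroup E] [NormedSpace ℝ E] (hm : 0 < m) {u : Fin m → E}
    {c : ℝ} (hu : ∀ i, ‖u i‖ ≤ c) : ‖rowAvg u‖ ≤ c := by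
  have hm' : (0 : ℝ) < m := Nat.cast_pos.2 hm
  have h_sum : ‖∑ i, u i‖ ≤ m * c := by
    simpa using norm_sum_le_of_le univ fun i _ => hu i
  rw [rowAvg, norm_smul, norm_inv, Real.norm_natCast]
  exact (inv_mul_le_iff₀ hm').2 h_sum

variable [NormedAddCommGroup E] [InnerProductSpace ℝ E] [CompleteSpace E]

lemma hasGradientAt_rowAvg {f : Fin m → E → ℝ} {f' : Fin m → E} {y : E}
    (hf : ∀ i, HasGradientAt (f i) (f' i) y) :
    HasGradientAt (fun z => rowAvg fun i => f i z) (rowAvg f') y := by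
  rw [hasGradientAt_iff_hasFDerivAt, rowAvg, map_smul, map_sum]
  exact (HasFDerivAt.fun_sum fun i _ => (hf i).hasFDerivAt).const_smul (m : ℝ)⁻¹

lemma norm_gradient_rowAvg_sub_le (hm : 0 < m) {f : Fin m → E → ℝ} {L : ℝ}
    (hf : ∀ i, Differentiable ℝ (f i))
    (hLip : ∀ i y z, ‖gradient (f i) y - gradient (f i) z‖ ≤ L * ‖y - z‖) (y z : E) :
    ‖gradient (fun w => rowAvg fun i => f i w) y - gradient (fun w => rowAvg fun i => f i w) z‖
      ≤ L * ‖y - z‖ := by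
  have h_grad (w : E) : gradient (fun w => rowAvg fun i => f i w) w
      = rowAvg fun i => gradient (f i) w :=
    (hasGradientAt_rowAvg fun i => (hf i w).hasGradientAt).gradient
  rw [h_grad, h_grad, ← rowAvg_sub]
  exact norm_rowAvg_le hm fun i => hLip i y z

end RowAverage

lemma fnorm_sq {m : ℕ} {E : Type} [NormedAddCommGroup E] (u : Fin m → E) :
    fnorm u ^ 2 = ∑ i, ‖u i‖ ^ 2 :=
  Real.sq_sqrt (sum_nonneg fun _ _ => sq_nonneg _)

lemma sum_norm_sq_le_of_lipschitz {m : ℕ} {E F : Type} [NormedAddCommGroup E]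
    [SeminormedAddCommGroup F] {g : E → F} {L : ℝ} {z : E}
    (hg : ∀ y, ‖g y - g z‖ ≤ L * ‖y - z‖) (u : Fin m → E) :
    ∑ i, ‖g (u i)‖ ^ 2 ≤ 2 * L ^ 2 * fnorm (u - fun _ => z) ^ 2 + 2 * m * ‖g z‖ ^ 2 := by
  have h_row (i : Fin m) : ‖g (u i)‖ ^ 2 ≤ 2 * L ^ 2 * ‖u i - z‖ ^ 2 + 2 * ‖g z‖ ^ 2 :=
    calc ‖g (u i)‖ ^ 2 ≤ (L * ‖u i - z‖ + ‖g z‖) ^ 2 := by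
          gcongr
          exact (norm_le_norm_sub_add _ _).trans (by gcongr; exact hg _)
      _ ≤ 2 * ((L * ‖u i - z‖) ^ 2 + ‖g z‖ ^ 2) := add_sq_le
      _ = 2 * L ^ 2 * ‖u i - z‖ ^ 2 + 2 * ‖g z‖ ^ 2 := by ring
  calc ∑ i, ‖g (u i)‖ ^ 2 ≤ ∑ i, (2 * L ^ 2 * ‖u i - z‖ ^ 2 + 2 * ‖g z‖ ^ 2) :=
        sum_le_sum fun i _ => h_row i
    _ = 2 * L ^ 2 * fnorm (u - fun _ => z) ^ 2 + 2 * m * ‖g z‖ ^ 2 := by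
        simp only [fnorm_sq, Pi.sub_apply, sum_add_distrib, ← mul_sum, sum_const, card_univ,
          Fintype.card_fin, nsmul_eq_mul]
        ring

lemma one_sub_mul_sum_range_le {R : Type*} [Ring R] [PartialOrder R] [IsOrderedAddMonoid R]
    {T : ℕ} {q : R} {X Y : ℕ → R} (hXT : 0 ≤ X T)
    (h : ∀ t < T, X (t + 1) ≤ q * X t + Y t) :
    (1 - q) * ∑ t ∈ range T, X t ≤ X 0 + ∑ t ∈ range T, Y t := by
  have h_shift : ∑ t ∈ range T, X t + X T = ∑ t ∈ range T, X (t + 1) + X 0 :=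
    (sum_range_succ X T).symm.trans (sum_range_succ' X T)
  have h_sum : ∑ t ∈ range T, X (t + 1) ≤ q * ∑ t ∈ range T, X t + ∑ t ∈ range T, Y t := by
    rw [mul_sum, ← sum_add_distrib]
    exact sum_le_sum fun t ht => h t (mem_range.1 ht)
  rw [sub_mul, one_mul, sub_le_iff_le_add]
  calc ∑ t ∈ range T, X t ≤ ∑ t ∈ range T, X t + X T := le_add_of_nonneg_right hXT
    _ = ∑ t ∈ range T, X (t + 1) + X 0 := h_shift
    _ ≤ q * ∑ t ∈ range T, X t + ∑ t ∈ range T, Y t + X 0 := by gcongr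
    _ = X 0 + ∑ t ∈ range T, Y t + q * ∑ t ∈ range T, X t := by abel

lemma sum_range_le_mul_sum_range {𝕜 : Type*} [Field 𝕜] [LinearOrder 𝕜] [IsStrictOrderedRing 𝕜]
    {T : ℕ} {p θ : 𝕜} {X Y : ℕ → 𝕜} (hp : 0 < p) (hθ : 1 - p ≤ θ * p)
    (hX0 : X 0 ≤ 0) (hXT : 0 ≤ X T) (hY : ∀ t < T, 0 ≤ Y t)
    (h : ∀ t < T, X (t + 1) ≤ (1 - p) * X t + (1 - p) * Y t) :
    ∑ t ∈ range T, X t ≤ θ * ∑ t ∈ range T, Y t := by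
  have hY_sum : 0 ≤ ∑ t ∈ range T, Y t := sum_nonneg fun t ht => hY t (mem_range.1 ht)
  have h_tele := one_sub_mul_sum_range_le hXT h
  rw [sub_sub_cancel, ← mul_sum] at h_tele
  refine le_of_mul_le_mul_left ?_ hp
  calc p * ∑ t ∈ range T, X t ≤ (1 - p) * ∑ t ∈ range T, Y t := by linarith
    _ ≤ θ * p * ∑ t ∈ range T, Y t := by gcongr
    _ = p * (θ * ∑ t ∈ range T, Y t) := by ring

section Recursions

variable {T : ℕ} {m b p L η ρ ρhat fstar : ℝ} {F G U V C D : ℕ → ℝ}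

lemma sum_global_error_le (hm : 0 < m) (hb : 0 < b) (hp : 0 < p)
    (hbatch : 36 * (1 - p) ≤ m * b * p) (hC : ∀ t < T, 0 ≤ C t) (hD : ∀ t < T, 0 ≤ D t)
    (hU0 : U 0 ≤ 0) (hUT : 0 ≤ U T)
    (hU : ∀ t < T, U (t + 1) ≤ (1 - p) * U t + 9 * (1 - p) * L ^ 2 / (m ^ 2 * b) * C t
      + 3 * (1 - p) * L ^ 2 / (m * b) * D t) :
    ∑ t ∈ range T, U t
      ≤ L ^ 2 / (4 * m) * ∑ t ∈ range T, C t + L ^ 2 / 12 * ∑ t ∈ range T, D t :=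
  calc ∑ t ∈ range T, U t
      ≤ m * b / 36 * ∑ t ∈ range T,
          (9 * L ^ 2 / (m ^ 2 * b) * C t + 3 * L ^ 2 / (m * b) * D t) := by
        refine sum_range_le_mul_sum_range hp (by linarith) hU0 hUT (fun t ht => ?_) fun t ht => ?_
        · have := hC t ht
          have := hD t ht
          positivity
        · exact (hU t ht).trans_eq (by ring)
    _ = L ^ 2 / (4 * m) * ∑ t ∈ range T, C t + L ^ 2 / 12 * ∑ t ∈ range T, D t := by
        rw [sum_add_distrib, ← mul_sum, ← mul_sum]
        field

lemma sum_local_error_le (hm : 0 < m) (hb : 0 < b) (hp : 0 < p)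
    (hbatch : 36 * (1 - p) ≤ m * b * p) (hC : ∀ t < T, 0 ≤ C t) (hD : ∀ t < T, 0 ≤ D t)
    (hV0 : V 0 ≤ 0) (hVT : 0 ≤ V T)
    (hV : ∀ t < T, V (t + 1) ≤ (1 - p) * V t + 9 * (1 - p) * L ^ 2 / (m * b) * C t
      + 3 * (1 - p) * L ^ 2 / b * D t) :
    ∑ t ∈ range T, V t
      ≤ L ^ 2 / 4 * ∑ t ∈ range T, C t + m * L ^ 2 / 12 * ∑ t ∈ range T, D t := by
  -- The rescaled error `V / m` satisfies the recursion of the global error.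
  have h_scaled : ∑ t ∈ range T, V t / m
      ≤ L ^ 2 / (4 * m) * ∑ t ∈ range T, C t + L ^ 2 / 12 * ∑ t ∈ range T, D t := by
    refine sum_global_error_le (b := b) (p := p) (U := fun t => V t / m) hm hb hp hbatch hC hD
      (div_nonpos_of_nonpos_of_nonneg hV0 hm.le) (div_nonneg hVT hm.le) fun t ht => ?_
    rw [div_le_iff₀ hm]
    exact (hV t ht).trans_eq (by field)
  rw [← sum_div, div_le_iff₀ hm] at h_scaled
  exact h_scaled.trans_eq (by field)

lemma drift_coefficient_le (hb : 1 ≤ b) (hp0 : 0 ≤ p) (hp1 : p ≤ 1) (hρ0 : 0 ≤ ρ) (hρ : ρ ≤ ρhat)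
    (hρhat : 296 * ρhat ^ 2 ≤ 1) :
    6 * (ρhat ^ 2 * (1 - p) / b + 2 * ρ ^ 2 * p) ≤ 18 / 296 := by
  have h_minibatch : ρhat ^ 2 * (1 - p) / b ≤ ρhat ^ 2 :=
    (div_le_self (mul_nonneg (sq_nonneg _) (sub_nonneg.2 hp1)) hb).trans
      (mul_le_of_le_one_right (sq_nonneg _) (sub_le_self _ hp0))
  have h_full : ρ ^ 2 * p ≤ ρhat ^ 2 :=
    (mul_le_of_le_one_right (sq_nonneg _) hp1).trans (by gcongr)
  linarith

lemma sum_consensus_error_le (hm : 0 ≤ m) (hb : 1 ≤ b) (hp0 : 0 ≤ p) (hp1 : p ≤ 1) (hL : 0 ≤ L)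
    (hη : 0 ≤ η) (hηL : 2 * η * L ≤ 1) (hρ0 : 0 ≤ ρ) (hρ : ρ ≤ ρhat) (hρhat : 296 * ρhat ^ 2 ≤ 1)
    (hmρ : 4 * m * p * ρ ^ 2 ≤ 1) (hC : ∀ t ≤ T, 0 ≤ C t) (hD : ∀ t < T, 0 ≤ D t)
    (hV : ∑ t ∈ range T, V t
      ≤ L ^ 2 / 4 * ∑ t ∈ range T, C t + m * L ^ 2 / 12 * ∑ t ∈ range T, D t)
    (hC_rec : ∀ t < T, C (t + 1) ≤ 1 / 4 * C t + 4 * ρ ^ 2 * p * η ^ 2 * m * V t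
      + 6 * (ρhat ^ 2 * (1 - p) / b + 2 * ρ ^ 2 * p) * m * D t) :
    11 / 16 * ∑ t ∈ range T, C t ≤ C 0 + m / 12 * ∑ t ∈ range T, D t := by
  have hC_sum : 0 ≤ ∑ t ∈ range T, C t := sum_nonneg fun t ht => hC t (mem_range.1 ht).le
  have hD_sum : 0 ≤ ∑ t ∈ range T, D t := sum_nonneg fun t ht => hD t (mem_range.1 ht)
  have h_tele := one_sub_mul_sum_range_le (hC T le_rfl) fun t ht =>
    (hC_rec t ht).trans_eq (add_assoc _ _ _)
  rw [sum_add_distrib, ← mul_sum, ← mul_sum] at h_tele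
  have h_tracking : 4 * ρ ^ 2 * p * η ^ 2 * m * ∑ t ∈ range T, V t
      ≤ 1 / 16 * ∑ t ∈ range T, C t + m / 48 * ∑ t ∈ range T, D t :=
    calc 4 * ρ ^ 2 * p * η ^ 2 * m * ∑ t ∈ range T, V t
        ≤ 4 * ρ ^ 2 * p * η ^ 2 * m
          * (L ^ 2 / 4 * ∑ t ∈ range T, C t + m * L ^ 2 / 12 * ∑ t ∈ range T, D t) := by gcongr
      _ = 4 * m * p * ρ ^ 2 * (2 * η * L) ^ 2
          * (1 / 16 * ∑ t ∈ range T, C t + m / 48 * ∑ t ∈ range T, D t) := by ring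
      _ ≤ 1 / 16 * ∑ t ∈ range T, C t + m / 48 * ∑ t ∈ range T, D t :=
          mul_le_of_le_one_left (by positivity)
            (mul_le_one₀ hmρ (by positivity) (pow_le_one₀ (by positivity) hηL))
  have h_drift : 6 * (ρhat ^ 2 * (1 - p) / b + 2 * ρ ^ 2 * p) * m * ∑ t ∈ range T, D t
      ≤ 18 / 296 * m * ∑ t ∈ range T, D t := by
    gcongr
    exact drift_coefficient_le hb hp0 hp1 hρ0 hρ hρhat
  have hmD : 0 ≤ m * ∑ t ∈ range T, D t := by positivity
  linarith

lemma sum_gradient_sq_le (hη : 0 < η) (hL : 0 ≤ L) (hηL : 2 * η * L ≤ 1)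
    (hD : ∀ t < T, 0 ≤ D t) (hFT : fstar ≤ F T)
    (hU : ∑ t ∈ range T, U t
      ≤ L ^ 2 / (4 * m) * ∑ t ∈ range T, C t + L ^ 2 / 12 * ∑ t ∈ range T, D t)
    (hF : ∀ t < T, F (t + 1) ≤ F t - η / 2 * G t + η * U t + L ^ 2 * η / m * C t
      - (1 / (2 * η) - L / 2) * D t) :
    ∑ t ∈ range T, G t ≤ 2 / η * (F 0 - fstar) + 5 * L ^ 2 / (2 * m) * ∑ t ∈ range T, C t
      - 11 / 6 * L ^ 2 * ∑ t ∈ range T, D t := by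
  have hD_sum : 0 ≤ ∑ t ∈ range T, D t := sum_nonneg fun t ht => hD t (mem_range.1 ht)
  have h_tele : 0 ≤ F 0 - fstar + ∑ t ∈ range T,
      (-(η / 2) * G t + η * U t + L ^ 2 * η / m * C t - (1 / (2 * η) - L / 2) * D t) := by
    rw [← zero_mul (∑ t ∈ range T, (F t - fstar)), ← sub_self (1 : ℝ)]
    refine one_sub_mul_sum_range_le (X := fun t => F t - fstar) (sub_nonneg.2 hFT) fun t ht => ?_
    linarith [hF t ht]
  rw [sum_sub_distrib, sum_add_distrib, sum_add_distrib, ← mul_sum, ← mul_sum, ← mul_sum,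
    ← mul_sum] at h_tele
  have h_step : η * L ^ 2 ≤ 1 / (2 * η) - L / 2 := by
    have h_inv : L ≤ 1 / (2 * η) := (le_div_iff₀ (by positivity)).2 (by linarith)
    have := mul_le_mul_of_nonneg_right hηL hL
    linarith
  have hU_scaled := mul_le_mul_of_nonneg_left hU hη.le
  have hD_scaled := mul_le_mul_of_nonneg_right h_step hD_sum
  refine le_of_mul_le_mul_left ?_ (half_pos hη)
  calc η / 2 * ∑ t ∈ range T, G t
      ≤ F 0 - fstar
        + η * (L ^ 2 / (4 * m) * ∑ t ∈ range T, C t + L ^ 2 / 12 * ∑ t ∈ range T, D t)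
        + L ^ 2 * η / m * ∑ t ∈ range T, C t - η * L ^ 2 * ∑ t ∈ range T, D t := by linarith
    _ = η / 2 * (2 / η * (F 0 - fstar) + 5 * L ^ 2 / (2 * m) * ∑ t ∈ range T, C t
        - 11 / 6 * L ^ 2 * ∑ t ∈ range T, D t) := by field

lemma consensus_add_gradient_le {SC SG SD gap ε : ℝ} (hm : 0 < m) (hη : 0 < η) (hL : 0 ≤ L)
    (hηL : 2 * η * L ≤ 1) (hT : 1 ≤ T) (hSD : 0 ≤ SD) {C₀ : ℝ} (hC₀ : C₀ ≤ m * η ^ 2 * ε ^ 2 / 8)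
    (hgap : 8 * gap / η ≤ T * ε ^ 2) (hSC : 11 / 16 * SC ≤ C₀ + m / 12 * SD)
    (hSG : SG ≤ 2 / η * gap + 5 * L ^ 2 / (2 * m) * SC - 11 / 6 * L ^ 2 * SD) :
    2 * L ^ 2 * SC + 2 * m * SG ≤ m * T * ε ^ 2 := by
  have hC₀_scaled : L ^ 2 * C₀ ≤ m * T * ε ^ 2 / 32 :=
    calc L ^ 2 * C₀ ≤ L ^ 2 * (m * η ^ 2 * ε ^ 2 / 8) := by gcongr
      _ = m * (2 * η * L) ^ 2 * ε ^ 2 / 32 := by ring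
      _ ≤ m * T * ε ^ 2 / 32 := by
          gcongr
          exact (pow_le_one₀ (by positivity) hηL).trans (Nat.one_le_cast.2 hT)
  have hgap_scaled : 2 * m / η * gap ≤ m * T * ε ^ 2 / 4 :=
    calc 2 * m / η * gap = m / 4 * (8 * gap / η) := by ring
      _ ≤ m / 4 * (T * ε ^ 2) := by gcongr
      _ = m * T * ε ^ 2 / 4 := by ring
  have hSG_scaled :
      m * SG ≤ 2 * m / η * gap + 5 / 2 * (L ^ 2 * SC) - 11 / 6 * (m * L ^ 2 * SD) :=
    calc m * SG ≤ m * (2 / η * gap + 5 * L ^ 2 / (2 * m) * SC - 11 / 6 * L ^ 2 * SD) := by gcongr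
      _ = 2 * m / η * gap + 5 / 2 * (L ^ 2 * SC) - 11 / 6 * (m * L ^ 2 * SD) := by field
  have hSC_scaled := mul_le_mul_of_nonneg_left hSC (sq_nonneg L)
  have hSD_scaled : 0 ≤ m * L ^ 2 * SD := by positivity
  have hε_scaled : 0 ≤ m * T * ε ^ 2 := by positivity
  linarith

end Recursions

lemma restart_probability_bounds {m b n : ℝ} (hb : 0 < b) (hn : 0 ≤ n)
    (hmb : 36 * n ≤ m * b ^ 2) :
    0 < b / (b + n) ∧ b / (b + n) ≤ 1 ∧ 36 * (1 - b / (b + n)) ≤ m * b * (b / (b + n)) := by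
  have hbn : 0 < b + n := add_pos_of_pos_of_nonneg hb hn
  refine ⟨div_pos hb hbn, (div_le_one hbn).2 (le_add_of_nonneg_right hn), ?_⟩
  calc 36 * (1 - b / (b + n)) = 36 * n / (b + n) := by field
    _ ≤ m * b ^ 2 / (b + n) := by gcongr
    _ = m * b * (b / (b + n)) := by ring

/-- Here `g` plays the role of `∇f` and `F t` that of `f(x̄_t)`; at `η = 1 / (2L)` the hypothesis
`hgap` reads `T ≥ 16 L (f(x̄₀) - f⋆) / ε²`. -/
theorem statement16_general {E E' : Type} [NormedAddCommGroup E] [NormedSpace ℝ E]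
    [SeminormedAddCommGroup E'] {m T : ℕ} (hm : 0 < m) (hT : 1 ≤ T)
    {L η ε fstar p b ρ ρhat : ℝ} (hL : 0 ≤ L) (hη : 0 < η) (hηL : 2 * η * L ≤ 1)
    {g : E → E'} (hg : ∀ y z, ‖g y - g z‖ ≤ L * ‖y - z‖)
    (x : ℕ → Fin m → E) {F U V C : ℕ → ℝ} (hFT : fstar ≤ F T)
    (hgap : 8 * (F 0 - fstar) / η ≤ T * ε ^ 2)
    (hb : 1 ≤ b) (hp0 : 0 < p) (hp1 : p ≤ 1) (hbatch : 36 * (1 - p) ≤ m * b * p)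
    (hρ0 : 0 ≤ ρ) (hρ : ρ ≤ ρhat) (hρhat : 296 * ρhat ^ 2 ≤ 1) (hmρ : 4 * m * p * ρ ^ 2 ≤ 1)
    (hUT : 0 ≤ U T) (hVT : 0 ≤ V T) (hU0 : U 0 ≤ 0) (hV0 : V 0 ≤ 0)
    (hC : ∀ t ≤ T, fnorm (x t - fun _ => rowAvg (x t)) ^ 2 ≤ C t)
    (hC0 : C 0 ≤ m * η ^ 2 * ε ^ 2 / 8)
    (hF_rec : ∀ t < T, F (t + 1) ≤ F t - η / 2 * ‖g (rowAvg (x t))‖ ^ 2 + η * U t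
      + L ^ 2 * η / m * C t
      - (1 / (2 * η) - L / 2) * ‖rowAvg (x (t + 1)) - rowAvg (x t)‖ ^ 2)
    (hU_rec : ∀ t < T, U (t + 1) ≤ (1 - p) * U t + 9 * (1 - p) * L ^ 2 / (m ^ 2 * b) * C t
      + 3 * (1 - p) * L ^ 2 / (m * b) * ‖rowAvg (x (t + 1)) - rowAvg (x t)‖ ^ 2)
    (hV_rec : ∀ t < T, V (t + 1) ≤ (1 - p) * V t + 9 * (1 - p) * L ^ 2 / (m * b) * C t
      + 3 * (1 - p) * L ^ 2 / b * ‖rowAvg (x (t + 1)) - rowAvg (x t)‖ ^ 2)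
    (hC_rec : ∀ t < T, C (t + 1) ≤ 1 / 4 * C t + 4 * ρ ^ 2 * p * η ^ 2 * m * V t
      + 6 * (ρhat ^ 2 * (1 - p) / b + 2 * ρ ^ 2 * p) * m
        * ‖rowAvg (x (t + 1)) - rowAvg (x t)‖ ^ 2) :
    ((m : ℝ) * T)⁻¹ * ∑ t ∈ range T, ∑ i, ‖g (x t i)‖ ^ 2 ≤ ε ^ 2 := by
  have hm' : (0 : ℝ) < m := Nat.cast_pos.2 hm
  have hT' : (0 : ℝ) < T := Nat.cast_pos.2 hT
  have hb' : 0 < b := one_pos.trans_le hb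
  have hC_nonneg (t : ℕ) (ht : t ≤ T) : 0 ≤ C t := (sq_nonneg _).trans (hC t ht)
  have hC_nonneg' (t : ℕ) (ht : t < T) : 0 ≤ C t := hC_nonneg t ht.le
  have hD_nonneg (t : ℕ) (_ : t < T) : 0 ≤ ‖rowAvg (x (t + 1)) - rowAvg (x t)‖ ^ 2 := sq_nonneg _
  have hU := sum_global_error_le hm' hb' hp0 hbatch hC_nonneg' hD_nonneg hU0 hUT hU_rec
  have hV := sum_local_error_le hm' hb' hp0 hbatch hC_nonneg' hD_nonneg hV0 hVT hV_rec
  have hC_sum := sum_consensus_error_le hm'.le hb hp0.le hp1 hL hη.le hηL hρ0 hρ hρhat hmρ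
    hC_nonneg hD_nonneg hV hC_rec
  have hG := sum_gradient_sq_le hη hL hηL hD_nonneg hFT hU hF_rec
  have h_local : ∑ t ∈ range T, ∑ i, ‖g (x t i)‖ ^ 2 ≤ 2 * L ^ 2 * ∑ t ∈ range T, C t
      + 2 * m * ∑ t ∈ range T, ‖g (rowAvg (x t))‖ ^ 2 := by
    rw [mul_sum, mul_sum, ← sum_add_distrib]
    refine sum_le_sum fun t ht =>
      (sum_norm_sq_le_of_lipschitz (fun y => hg y (rowAvg (x t))) (x t)).trans ?_
    gcongr
    exact hC t (mem_range.1 ht).le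
  rw [inv_mul_le_iff₀ (mul_pos hm' hT')]
  exact h_local.trans <| consensus_add_gradient_le hm' hη hL hηL hT
    (sum_nonneg fun t ht => hD_nonneg t (mem_range.1 ht)) hC0 hgap hC_sum hG


theorem statement16 (m n d b T : ℕ) (hm : 1 ≤ m) (hn : 1 ≤ n) (hb : 1 ≤ b) (hT : 1 ≤ T)
    (L ε : ℝ) (hL : 0 < L) (hε : 0 < ε)
    (η : ℝ) (hη : η = 1 / (2 * L))
    (fi : Fin m → EuclideanSpace ℝ (Fin d) → ℝ)
    (hdiff : ∀ i, Differentiable ℝ (fi i))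
    (hLip : ∀ i, ∀ y y' : EuclideanSpace ℝ (Fin d),
      ‖gradient (fi i) y - gradient (fi i) y'‖ ≤ L * ‖y - y'‖)
    (f : EuclideanSpace ℝ (Fin d) → ℝ)
    (hf : ∀ y, f y = (m : ℝ)⁻¹ * ∑ i, fi i y)
    (fstar : ℝ) (hlb : ∀ y, fstar ≤ f y)
    (x : ℕ → Fin m → EuclideanSpace ℝ (Fin d))
    (hmb : 36 * n ≤ m * b ^ 2)
    (hTbig : 16 * L * (f (rowAvg (x 0)) - fstar) / ε ^ 2 ≤ (T : ℝ))
    (p : ℝ) (hp : p = (b : ℝ) / ((b : ℝ) + (n : ℝ)))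
    (rho rhoh : ℝ) (hrho0 : 0 ≤ rho) (hrhole : rho ≤ rhoh)
    (h296 : 296 * rhoh ^ 2 ≤ 1) (h4 : 4 * (m : ℝ) * p * rho ^ 2 ≤ 1)
    (U V C : ℕ → ℝ)
    (hUnn : ∀ t ≤ T, 0 ≤ U t) (hVnn : ∀ t ≤ T, 0 ≤ V t) (hCnn : ∀ t ≤ T, 0 ≤ C t)
    (hCge : ∀ t ≤ T, fnorm (x t - fun _ => rowAvg (x t)) ^ 2 ≤ C t)
    (hU0 : U 0 = 0) (hV0 : V 0 = 0)
    (hC0 : C 0 ≤ (m : ℝ) * η ^ 2 * ε ^ 2 / 8)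
    (hA : ∀ t < T, f (rowAvg (x (t + 1))) ≤ f (rowAvg (x t))
      - (η / 2) * ‖gradient f (rowAvg (x t))‖ ^ 2 + η * U t + (L ^ 2 * η / (m : ℝ)) * C t
      - (1 / (2 * η) - L / 2) * ‖rowAvg (x (t + 1)) - rowAvg (x t)‖ ^ 2)
    (hB : ∀ t < T, U (t + 1) ≤ (1 - p) * U t
      + (9 * (1 - p) * L ^ 2 / ((m : ℝ) ^ 2 * (b : ℝ))) * C t
      + (3 * (1 - p) * L ^ 2 / ((m : ℝ) * (b : ℝ))) * ‖rowAvg (x (t + 1)) - rowAvg (x t)‖ ^ 2)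
    (hCrec : ∀ t < T, V (t + 1) ≤ (1 - p) * V t
      + (9 * (1 - p) * L ^ 2 / ((m : ℝ) * (b : ℝ))) * C t
      + (3 * (1 - p) * L ^ 2 / (b : ℝ)) * ‖rowAvg (x (t + 1)) - rowAvg (x t)‖ ^ 2)
    (hDrec : ∀ t < T, C (t + 1) ≤ (1 / 4) * C t + 4 * rho ^ 2 * p * η ^ 2 * (m : ℝ) * V t
      + 6 * (rhoh ^ 2 * (1 - p) / (b : ℝ) + 2 * rho ^ 2 * p) * (m : ℝ) *
          ‖rowAvg (x (t + 1)) - rowAvg (x t)‖ ^ 2) :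
    ((m : ℝ) * (T : ℝ))⁻¹ * ∑ t ∈ Finset.range T, ∑ i, ‖gradient f (x t i)‖ ^ 2 ≤ ε ^ 2 := by
  obtain rfl : f = fun y => rowAvg fun i => fi i y := funext hf
  subst hη hp
  have hb' : (1 : ℝ) ≤ b := Nat.one_le_cast.2 hb
  obtain ⟨hp0, hp1, hbatch⟩ := restart_probability_bounds (m := m) (one_pos.trans_le hb')
    n.cast_nonneg (by exact_mod_cast hmb)
  exact statement16_general (F := fun t => rowAvg fun i => fi i (rowAvg (x t))) hm hT hL.le
    (by positivity) (by field_simp; rfl) (norm_gradient_rowAvg_sub_le hm hdiff hLip) x (hlb _)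
    ((div_le_iff₀ (by positivity)).1 (hTbig.trans_eq' (by field))) hb' hp0 hp1 hbatch
    hrho0 hrhole h296 h4 (hUnn T le_rfl) (hVnn T le_rfl) hU0.le hV0.le hCge hC0 hA hB hCrec hDrec
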